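/- Resolvent Formula: Let V be a finite nonempty index set and A an irreducible Metzler real matrix indexed by V with A_{σ,σ} ≤ 0 for all σ, admitting a Perron root λ* (λ* is an eigenvalue of A and every complex eigenvalue of A has real part at most λ*). For α > 0 and σ ∈ V, let f(α)_{σ→σ} ∈ [0,∞] be the tsum, over all excursions σ = σ₁, …, σ_ℓ = σ (ℓ ≥ 2, σ_i ≠ σ for 1 < i < ℓ), of ∏_{i=1}^{ℓ−1} A_{σ_{i+1},σ_i}/(α − A_{σ_i,σ_i}). Then for every α > 0: λ* ≥ α if and only if there exists σ ∈ V with f(α)_{σ→σ} ≥ 1, if and only if f(α)_{σ→σ} ≥ 1 for every σ ∈ V. -/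

import Mathlib

open scoped ENNReal

/-- The weight of a finite path, as the product (in `[0,∞]`) of the
`ENNReal.ofReal`-weights of its consecutive pairs. The empty product is `1`. -/
noncomputable def pathWeight {V : Type*} (w : V → V → ℝ) : List V → ℝ≥0∞
  | [] => 1
  | [_] => 1
  | a :: b :: l => ENNReal.ofReal (w a b) * pathWeight w (b :: l)

/-- `l` is an excursion from `σ` to `σ`: a walk of length `≥ 2` starting and
ending at `σ` whose intermediate vertices are all different from `σ`. -/
def IsExcursion {V : Type*} (σ : V) (l : List V) : Prop :=
  2 ≤ l.length ∧ l.head? = some σ ∧ l.getLast? = some σ ∧ ∀ x ∈ l.tail.dropLast, x ≠ σ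

/-- The total weight `f(α)_{σ→σ}` of all excursions from `σ` to `σ`, with
transition weights `w(α)_{x→y} = A_{y,x}/(α − A_{x,x})`. -/
noncomputable def excursionWeight {V : Type*} (A : Matrix V V ℝ) (α : ℝ) (σ : V) : ℝ≥0∞ :=
  ∑' l : {l : List V // IsExcursion σ l},
    pathWeight (fun x y => A y x / (α - A x x)) l.1

/-- A complex number `μ` is an eigenvalue of the real matrix `M`
(via its complexification). -/
def Matrix.IsComplexEigenvalue {V : Type*} [Fintype V] (M : Matrix V V ℝ) (μ : ℂ) : Prop :=
  ∃ v : V → ℂ, v ≠ 0 ∧ (M.map (Complex.ofReal)).mulVec v = μ • v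

/-- `lam` is the Perron root (Lyapunov exponent) of `A`. -/
def Matrix.IsPerronRoot {V : Type*} [Fintype V] (A : Matrix V V ℝ) (lam : ℝ) : Prop :=
  (∃ v : V → ℝ, v ≠ 0 ∧ A.mulVec v = lam • v) ∧
  ∀ μ : ℂ, A.IsComplexEigenvalue μ → μ.re ≤ lam

/-- `A` is a Metzler matrix: all off-diagonal entries are nonnegative. -/
def Matrix.IsMetzler {V : Type*} (A : Matrix V V ℝ) : Prop :=
  ∀ σ σ' : V, σ ≠ σ' → 0 ≤ A σ' σ

/-- `A` is irreducible: any two distinct indices are connected by a chain of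
strictly positive transition entries. -/
def Matrix.IsIrreducibleMetzlerChain {V : Type*} (A : Matrix V V ℝ) : Prop :=
  ∀ σ σ' : V, σ ≠ σ' → Relation.TransGen (fun x y => x ≠ y ∧ 0 < A y x) σ σ'

section Excursions

variable {V : Type*}

/-- The excursions from `σ` correspond to the lists of vertices different from `σ`. -/
noncomputable def excursionEquiv (σ : V) : List {x : V // x ≠ σ} ≃ {l : List V // IsExcursion σ l} :=
  Equiv.ofBijective (fun m => ⟨σ :: (m.map Subtype.val ++ [σ]), by
    refine ⟨by simp, by simp, by simp [List.getLast?_cons], ?_⟩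
    intro x hx
    simp only [List.tail_cons, List.dropLast_concat, List.mem_map] at hx
    obtain ⟨y, -, rfl⟩ := hx
    exact y.2⟩) <| by
  constructor
  · intro m m' h
    exact Subtype.val_injective.list_map
      (List.append_cancel_right (List.cons.inj (Subtype.ext_iff.1 h)).2)
  · rintro ⟨l, hlen, hhead, hlast, hmid⟩
    obtain _ | ⟨a, t⟩ := l
    · simp at hlen
    obtain rfl : a = σ := by simpa using hhead
    have ht : t ≠ [] := by
      rintro rfl
      simp at hlen
    have hl : t.getLast ht = a := by
      rw [List.getLast?_eq_some_getLast (by simp), List.getLast_cons ht] at hlast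
      simpa using hlast
    refine ⟨t.dropLast.attachWith (· ≠ a) hmid, Subtype.ext ?_⟩
    have := List.dropLast_append_getLast ht
    rw [hl] at this
    simp only [List.attachWith_map_subtype_val (l := t.dropLast) hmid, this]

/-- The total weight of the paths from `x` which stop when hitting `σ` at a positive time. -/
noncomputable def hittingWeight (w : V → V → ℝ) (σ x : V) : ℝ≥0∞ :=
  ∑' m : List {y : V // y ≠ σ}, pathWeight w (x :: (m.map Subtype.val ++ [σ]))

theorem excursionWeight_eq_hittingWeight (A : Matrix V V ℝ) (α : ℝ) (σ : V) :
    excursionWeight A α σ = hittingWeight (fun x y => A y x / (α - A x x)) σ σ :=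
  ((excursionEquiv σ).tsum_eq (fun l => pathWeight _ l.1)).symm

theorem ENNReal.tsum_list {β : Type*} [Fintype β] (F : List β → ℝ≥0∞) :
    ∑' l, F l = F [] + ∑ b, ∑' l, F (b :: l) := by
  let e : Unit ⊕ β × List β ≃ List β :=
    { toFun := Sum.elim (fun _ => []) fun p => p.1 :: p.2
      invFun := fun l => match l with
        | [] => .inl ()
        | b :: l => .inr (b, l)
      left_inv := by rintro (_ | ⟨b, l⟩) <;> rfl
      right_inv := by rintro (_ | ⟨b, l⟩) <;> rfl }
  rw [← e.tsum_eq F, ENNReal.summable.tsum_sum ENNReal.summable, tsum_fintype,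
    Fintype.sum_unique, ← tsum_fintype (L := .unconditional β)]
  exact congrArg (F [] + ·) (ENNReal.tsum_prod (f := fun b l => F (b :: l)))

variable [Fintype V] [DecidableEq V]

theorem hittingWeight_eq (w : V → V → ℝ) (σ x : V) :
    hittingWeight w σ x = ENNReal.ofReal (w x σ) +
      ∑ y : {y : V // y ≠ σ}, ENNReal.ofReal (w x y) * hittingWeight w σ y := by
  rw [hittingWeight, ENNReal.tsum_list]
  simp only [hittingWeight, List.map_nil, List.map_cons, List.nil_append, List.cons_append,
    pathWeight, mul_one, ENNReal.tsum_mul_left]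

theorem sum_eq_add_sum_ne (σ : V) (F : V → ℝ≥0∞) :
    ∑ y, F y = F σ + ∑ y : {y : V // y ≠ σ}, F y := by
  rw [← Finset.add_sum_erase _ _ (Finset.mem_univ σ)]
  congr 1
  exact Finset.sum_subtype _ (by simp) _

/-- A superharmonic function equal to `1` at `σ` dominates the hitting weights. -/
theorem hittingWeight_le (w : V → V → ℝ) (σ : V) (H : V → ℝ≥0∞) (hσ : H σ = 1)
    (hH : ∀ x, ∑ y, ENNReal.ofReal (w x y) * H y ≤ H x) (x : V) :
    hittingWeight w σ x ≤ ∑ y, ENNReal.ofReal (w x y) * H y := by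
  have key : ∀ (n : ℕ) (x : V), ∑' m : List {y : V // y ≠ σ},
      (if m.length < n then pathWeight w (x :: (m.map Subtype.val ++ [σ])) else 0) ≤
        ∑ y, ENNReal.ofReal (w x y) * H y := by
    intro n
    induction n with
    | zero => simp
    | succ n ih =>
      intro x
      rw [ENNReal.tsum_list, sum_eq_add_sum_ne σ]
      refine add_le_add (by simp [pathWeight, hσ]) (Finset.sum_le_sum fun y _ => ?_)
      refine le_trans (le_of_eq ?_) (mul_le_mul_right ((ih y).trans (hH y)) _)
      rw [← ENNReal.tsum_mul_left]
      refine tsum_congr fun m => ?_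
      simp [pathWeight]
  rw [hittingWeight, ENNReal.tsum_eq_iSup_sum]
  refine iSup_le fun s => le_trans ?_ (key (s.sup List.length + 1) x)
  refine le_trans (Finset.sum_le_sum fun m hm => ?_) (ENNReal.sum_le_tsum s)
  rw [if_pos (Nat.lt_succ_of_le (Finset.le_sup (f := List.length) hm))]

end Excursions

section Metzler

open scoped Matrix

variable {V : Type*} [Fintype V] [DecidableEq V] {A : Matrix V V ℝ}

theorem sum_ofReal_transition_mul (hM : A.IsMetzler) (hdiag : ∀ σ, A σ σ ≤ 0) {α : ℝ}
    (hα : 0 < α) {h : V → ℝ} (hh : ∀ x, 0 ≤ h x) (x : V) :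
    ∑ y, ENNReal.ofReal (A y x / (α - A x x)) * ENNReal.ofReal (h y) =
      ENNReal.ofReal ((∑ y, A y x * h y - A x x * h x) / (α - A x x)) := by
  have hpos : 0 < α - A x x := by linarith [hdiag x]
  rw [← Finset.add_sum_erase _ _ (Finset.mem_univ x),
    ← Finset.add_sum_erase _ (fun y => A y x * h y) (Finset.mem_univ x),
    ENNReal.ofReal_of_nonpos (div_nonpos_of_nonpos_of_nonneg (hdiag x) hpos.le), zero_mul,
    zero_add, add_sub_cancel_left, Finset.sum_div, ENNReal.ofReal_sum_of_nonneg]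
  · refine Finset.sum_congr rfl fun y hy => ?_
    have := hM x y (Finset.ne_of_mem_erase hy).symm
    rw [← ENNReal.ofReal_mul (by positivity), div_mul_eq_mul_div]
  · intro y hy
    have := hM x y (Finset.ne_of_mem_erase hy).symm
    have := hh y
    positivity

/-- The minimum principle for `t • 1 - Aᵀ` in the presence of a positive strict supersolution. -/
theorem Matrix.IsMetzler.nonneg_of_supersolution (hM : A.IsMetzler) {t : ℝ} {z u : V → ℝ}
    (hz : ∀ x, 0 < z x) (hzt : ∀ x, ∑ y, A y x * z y < t * z x)
    (hu : ∀ x, ∑ y, A y x * u y ≤ t * u x) (x : V) : 0 ≤ u x := by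
  have : Nonempty V := ⟨x⟩
  obtain ⟨m, hm⟩ := Finite.exists_min fun y => u y / z y
  suffices hc : 0 ≤ u m / z m from
    (div_nonneg_iff.1 (hc.trans (hm x))).elim And.left fun h => absurd (hz x) h.2.not_gt
  by_contra! hc
  have hum : u m = u m / z m * z m := (div_mul_cancel₀ _ (hz m).ne').symm
  have h1 : u m / z m * ∑ y, A y m * z y ≤ ∑ y, A y m * u y := by
    rw [Finset.mul_sum]
    refine Finset.sum_le_sum fun y _ => ?_
    by_cases hy : y = m
    · subst hy
      exact le_of_eq (by linear_combination (-A y y) * hum)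
    · have h2 := (le_div_iff₀ (hz y)).1 (hm y)
      have h3 := mul_le_mul_of_nonneg_left h2 (hM m y (Ne.symm hy))
      linarith
  have h4 := mul_lt_mul_of_neg_left (hzt m) hc
  have h5 := hu m
  have h6 : u m / z m * (t * z m) = t * u m := by linear_combination (-t) * hum
  linarith

theorem Matrix.IsPerronRoot.det_ne_zero {lam t : ℝ} (hP : A.IsPerronRoot lam) (ht : lam < t) :
    (t • (1 : Matrix V V ℝ) - Aᵀ).det ≠ 0 := by
  intro h0
  have h0' : (t • (1 : Matrix V V ℝ) - A).det = 0 := by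
    rw [← Matrix.det_transpose]
    simpa using h0
  obtain ⟨v, hv, hv0⟩ := Matrix.exists_mulVec_eq_zero_iff.2 h0'
  rw [Matrix.sub_mulVec, Matrix.smul_mulVec, Matrix.one_mulVec, sub_eq_zero] at hv0
  refine absurd (hP.2 (t : ℂ) ⟨fun x => (v x : ℂ), ?_, ?_⟩) (by simpa using ht)
  · intro h
    exact hv (funext fun x => by simpa using congrFun h x)
  · funext x
    have := congrFun hv0 x
    simp only [Pi.smul_apply, smul_eq_mul, Matrix.mulVec, dotProduct, Matrix.map_apply] at this ⊢
    exact_mod_cast this.symm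

/-- Above the Perron root there is a positive strict supersolution. -/
theorem Matrix.IsPerronRoot.exists_supersolution {lam α : ℝ} (hP : A.IsPerronRoot lam)
    (hM : A.IsMetzler) (hlam : lam < α) :
    ∃ h : V → ℝ, (∀ x, 0 < h x) ∧ ∀ x, ∑ y, A y x * h y < α * h x := by
  let S : Set ℝ := {t | ∃ h : V → ℝ, (∀ x, 0 < h x) ∧ ∀ x, ∑ y, A y x * h y < t * h x}
  by_contra hαS
  replace hαS : α ∉ S := hαS
  have hup : ∀ s ∈ S, ∀ t, s ≤ t → t ∈ S := by
    rintro s ⟨h, hpos, hs⟩ t hst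
    exact ⟨h, hpos, fun x => (hs x).trans_le (mul_le_mul_of_nonneg_right hst (hpos x).le)⟩
  have hbdd : α ∈ lowerBounds S := fun s hs => by
    by_contra! hlt
    exact hαS (hup s hs α hlt.le)
  have hne : S.Nonempty := by
    obtain ⟨t, ht⟩ := (Set.finite_range fun x => ∑ y, A y x).bddAbove
    refine ⟨t + 1, fun _ => 1, fun _ => one_pos, fun x => ?_⟩
    have := ht (Set.mem_range_self x)
    simp only [mul_one]
    linarith
  have hopen : IsOpen S := by
    rw [isOpen_iff_mem_nhds]
    rintro s ⟨h, hpos, hs⟩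
    have : ∀ᶠ t in nhds s, ∀ x, ∑ y, A y x * h y < t * h x :=
      Filter.eventually_all.2 fun x =>
        (continuous_id.mul continuous_const).continuousAt.eventually_const_lt (hs x)
    exact this.mono fun t ht => ⟨h, hpos, ht⟩
  have hα₀ : α ≤ sInf S := le_csInf hne hbdd
  have hgt : ∀ t, sInf S < t → t ∈ S := fun t ht => by
    obtain ⟨s, hs, hst⟩ := exists_lt_of_csInf_lt hne ht
    exact hup s hs t hst.le
  suffices hmem : sInf S ∈ S by
    obtain ⟨ε, hε, hball⟩ := Metric.isOpen_iff.1 hopen _ hmem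
    have : sInf S - ε / 2 ∈ S := hball (by
      rw [Metric.mem_ball, Real.dist_eq, abs_lt]
      constructor <;> linarith)
    have := csInf_le ⟨α, hbdd⟩ this
    linarith
  let B : ℝ → Matrix V V ℝ := fun t => t • (1 : Matrix V V ℝ) - Aᵀ
  let u : ℝ → V → ℝ := fun t => (B t).det⁻¹ • ((B t).adjugate *ᵥ 1)
  have hB : Continuous B := by fun_prop
  have hBdet : ∀ t, lam < t → (B t).det ≠ 0 := fun t ht => hP.det_ne_zero ht
  have hsol : ∀ t, lam < t → ∀ x, t * u t x - ∑ y, A y x * u t y = 1 := by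
    intro t ht x
    have h1 : B t *ᵥ u t = 1 := by
      simp only [u, Matrix.mulVec_smul, Matrix.mulVec_mulVec, Matrix.mul_adjugate,
        Matrix.smul_mulVec, Matrix.one_mulVec, smul_smul, inv_mul_cancel₀ (hBdet t ht), one_smul]
    have h2 := congrFun h1 x
    simp only [B, Matrix.sub_mulVec, Matrix.smul_mulVec, Matrix.one_mulVec, Pi.sub_apply,
      Pi.smul_apply, smul_eq_mul, Pi.one_apply] at h2
    rw [← h2]
    rfl
  have hcont : ∀ x, ContinuousAt (fun t => u t x) (sInf S) := by
    intro x
    have h1 : Continuous fun t => ((B t).adjugate *ᵥ (1 : V → ℝ)) x :=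
      (continuous_apply x).comp (hB.matrix_adjugate.matrix_mulVec continuous_const)
    exact (hB.matrix_det.continuousAt.inv₀ (hBdet _ (hlam.trans_le hα₀))).mul h1.continuousAt
  have hnonneg : ∀ x, 0 ≤ u (sInf S) x := fun x => by
    refine ge_of_tendsto ((hcont x).tendsto.mono_left nhdsWithin_le_nhds :
      Filter.Tendsto _ (nhdsWithin (sInf S) (Set.Ioi (sInf S))) _) ?_
    filter_upwards [self_mem_nhdsWithin] with t ht
    obtain ⟨z, hz, hzt⟩ := hgt t ht
    refine hM.nonneg_of_supersolution hz hzt (fun y => ?_) x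
    have := hsol t (by linarith [Set.mem_Ioi.1 ht]) y
    linarith
  have hsol₀ := hsol _ (hlam.trans_le hα₀)
  refine ⟨u (sInf S), fun x => ?_, fun x => by linarith [hsol₀ x]⟩
  refine (hnonneg x).lt_of_ne fun h0 => ?_
  have h1 : 0 ≤ ∑ y, A y x * u (sInf S) y := Finset.sum_nonneg fun y _ => by
    by_cases hy : y = x
    · rw [hy, ← h0, mul_zero]
    · exact mul_nonneg (hM x y (Ne.symm hy)) (hnonneg y)
  have h2 := hsol₀ x
  rw [← h0] at h2
  linarith

theorem excursionWeight_lt_one {lam α : ℝ} (hP : A.IsPerronRoot lam)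
    (hM : A.IsMetzler) (hdiag : ∀ σ, A σ σ ≤ 0) (hα : 0 < α) (hlam : lam < α) (σ : V) :
    excursionWeight A α σ < 1 := by
  obtain ⟨h, hpos, hlt⟩ := hP.exists_supersolution hM hlam
  let g : V → ℝ := fun x => h x / h σ
  have hg : ∀ x, 0 < g x := fun x => div_pos (hpos x) (hpos σ)
  have hgσ : g σ = 1 := div_self (hpos σ).ne'
  have hglt : ∀ x, ∑ y, A y x * g y < α * g x := fun x => by
    simp only [g, ← mul_div_assoc, ← Finset.sum_div]
    exact div_lt_div_of_pos_right (hlt x) (hpos σ)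
  have key : ∀ x, ∑ y, ENNReal.ofReal (A y x / (α - A x x)) * ENNReal.ofReal (g y) <
      ENNReal.ofReal (g x) := fun x => by
    have hx : 0 < α - A x x := by linarith [hdiag x]
    rw [sum_ofReal_transition_mul hM hdiag hα (fun y => (hg y).le),
      ENNReal.ofReal_lt_ofReal_iff (hg x), div_lt_iff₀ hx]
    linarith [hglt x]
  rw [excursionWeight_eq_hittingWeight]
  refine (hittingWeight_le _ σ (fun x => ENNReal.ofReal (g x)) (by simp [hgσ])
    (fun x => (key x).le) σ).trans_lt ?_
  simpa [hgσ] using key σ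

/-- If the excursion weight at `σ` is below `1`, there is a positive supersolution which is
strict at `σ`. -/
theorem exists_supersolution_of_excursionWeight_lt_one (hM : A.IsMetzler)
    (hdiag : ∀ σ, A σ σ ≤ 0) (hirr : A.IsIrreducibleMetzlerChain) {α : ℝ} (hα : 0 < α) {σ : V}
    (hσ : excursionWeight A α σ < 1) :
    ∃ h : V → ℝ, (∀ x, 0 < h x) ∧ (∀ x, ∑ y, A y x * h y ≤ α * h x) ∧
      ∑ y, A y σ * h y < α * h σ := by
  let w : V → V → ℝ := fun x y => A y x / (α - A x x)
  have hden : ∀ x, 0 < α - A x x := fun x => by linarith [hdiag x]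
  let H : V → ℝ≥0∞ := fun x => if x = σ then 1 else hittingWeight w σ x
  have hsum : ∀ x, ∑ y, ENNReal.ofReal (w x y) * H y = hittingWeight w σ x := fun x => by
    rw [sum_eq_add_sum_ne σ, hittingWeight_eq]
    simp only [H, if_true, mul_one]
    congr 1
    exact Finset.sum_congr rfl fun y _ => by rw [if_neg y.2]
  have hσ' : hittingWeight w σ σ < 1 := excursionWeight_eq_hittingWeight A α σ ▸ hσ
  have hHle : ∀ x, ∑ y, ENNReal.ofReal (w x y) * H y ≤ H x := fun x => by
    rw [hsum]
    by_cases hx : x = σ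
    · subst hx
      simpa [H] using hσ'.le
    · simp [H, hx]
  have hstep : ∀ x y, ENNReal.ofReal (w x y) * H y ≤ H x := fun x y =>
    (Finset.single_le_sum (f := fun y => ENNReal.ofReal (w x y) * H y)
      (fun _ _ => zero_le) (Finset.mem_univ y)).trans (hHle x)
  have hw : ∀ {x y}, 0 < A y x → ENNReal.ofReal (w x y) ≠ 0 := fun {x y} hxy =>
    (ENNReal.ofReal_pos.2 (div_pos hxy (hden x))).ne'
  have hfin : ∀ x, H x ≠ ∞ := fun x => by
    by_cases hx : x = σ
    · simp [H, hx]
    have step : ∀ {a b}, (a ≠ b ∧ 0 < A b a) → H a ≠ ∞ → H b ≠ ∞ := by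
      rintro a b ⟨-, hab⟩ ha hb
      have := hstep a b
      rw [hb, ENNReal.mul_top (hw hab), top_le_iff] at this
      exact ha this
    have hσfin : H σ ≠ ∞ := by simp [H]
    induction hirr σ x (Ne.symm hx) with
    | single hab => exact step hab hσfin
    | tail _ hbc ih =>
      rename_i b c _
      by_cases hb : b = σ
      · exact step hbc (hb ▸ hσfin)
      · exact step hbc (ih hb)
  have hpos : ∀ x, H x ≠ 0 := fun x => by
    by_cases hx : x = σ
    · simp [H, hx]
    have step : ∀ {a b}, (a ≠ b ∧ 0 < A b a) → H b ≠ 0 → H a ≠ 0 := by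
      rintro a b ⟨-, hab⟩ hb ha
      have := hstep a b
      rw [ha, nonpos_iff_eq_zero, mul_eq_zero] at this
      exact this.elim (hw hab) hb
    refine Relation.TransGen.head_induction_on (motive := fun a _ => H a ≠ 0) (hirr x σ hx) ?_ ?_
    · exact fun h => step h (by simp [H])
    · exact fun h _ ih => step h ih
  have hof : ∀ x, ENNReal.ofReal (H x).toReal = H x := fun x => ENNReal.ofReal_toReal (hfin x)
  have hpos' : ∀ x, 0 < (H x).toReal := fun x => ENNReal.toReal_pos (hpos x) (hfin x)
  have hconv : ∀ x, hittingWeight w σ x =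
      ENNReal.ofReal ((∑ y, A y x * (H y).toReal - A x x * (H x).toReal) / (α - A x x)) := by
    intro x
    rw [← sum_ofReal_transition_mul hM hdiag hα (fun y => (hpos' y).le), ← hsum]
    simp only [hof, w]
  refine ⟨fun x => (H x).toReal, hpos', fun x => ?_, ?_⟩
  · have := hHle x
    rw [hsum, hconv, ← hof x, ENNReal.ofReal_le_ofReal_iff (hpos' x).le, div_le_iff₀ (hden x),
      hof x] at this
    linarith
  · have h1 : H σ = 1 := by simp [H]
    have := hσ'
    rw [hconv, ← h1, ← hof σ, ENNReal.ofReal_lt_ofReal_iff (hpos' σ), div_lt_iff₀ (hden σ),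
      hof σ] at this
    linarith

/-- A positive supersolution which is strict somewhere bounds the Perron root. -/
theorem Matrix.IsPerronRoot.lt_of_supersolution {lam α : ℝ} (hP : A.IsPerronRoot lam)
    (hM : A.IsMetzler) (hdiag : ∀ σ, A σ σ ≤ 0) (hirr : A.IsIrreducibleMetzlerChain)
    (hα : 0 < α) {h : V → ℝ} (hpos : ∀ x, 0 < h x) (hle : ∀ x, ∑ y, A y x * h y ≤ α * h x)
    {σ : V} (hσ : ∑ y, A y σ * h y < α * h σ) : lam < α := by
  by_contra! hlam
  obtain ⟨v, hv, hAv⟩ := hP.1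
  have hsub : ∀ x, α * |v x| ≤ ∑ y, A x y * |v y| := by
    intro x
    have h1 := congrFun hAv x
    simp only [Matrix.mulVec, dotProduct, Pi.smul_apply, smul_eq_mul] at h1
    rw [← Finset.add_sum_erase _ _ (Finset.mem_univ x)] at h1 ⊢
    have h2 : |(lam - A x x) * v x| ≤ ∑ y ∈ Finset.univ.erase x, A x y * |v y| := by
      rw [show (lam - A x x) * v x = ∑ y ∈ Finset.univ.erase x, A x y * v y by linarith]
      refine (Finset.abs_sum_le_sum_abs _ _).trans (le_of_eq (Finset.sum_congr rfl fun y hy => ?_))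
      rw [abs_mul, abs_of_nonneg (hM y x (Finset.ne_of_mem_erase hy))]
    rw [abs_mul, abs_of_nonneg (by linarith [hdiag x])] at h2
    have h3 := mul_le_mul_of_nonneg_right hlam (abs_nonneg (v x))
    linarith
  have hswap : ∑ x, h x * ∑ y, A x y * |v y| = ∑ y, (∑ x, A x y * h x) * |v y| := by
    simp only [Finset.mul_sum, Finset.sum_mul]
    rw [Finset.sum_comm]
    exact Finset.sum_congr rfl fun _ _ => Finset.sum_congr rfl fun _ _ => by ring
  have hzero : ∑ x, (h x * (∑ y, A x y * |v y| - α * |v x|) +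
      (α * h x - ∑ y, A y x * h y) * |v x|) = 0 := by
    simp only [Finset.sum_add_distrib, mul_sub, sub_mul, Finset.sum_sub_distrib, hswap]
    rw [Finset.sum_congr rfl fun x _ => show h x * (α * |v x|) = α * h x * |v x| by ring]
    ring
  have hfst : ∀ x, 0 ≤ h x * (∑ y, A x y * |v y| - α * |v x|) := fun x =>
    mul_nonneg (hpos x).le (by linarith [hsub x])
  have hsnd : ∀ x, 0 ≤ (α * h x - ∑ y, A y x * h y) * |v x| := fun x =>
    mul_nonneg (by linarith [hle x]) (abs_nonneg _)
  have hterm := fun x => (Finset.sum_eq_zero_iff_of_nonneg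
    (fun x _ => add_nonneg (hfst x) (hsnd x))).1 hzero x (Finset.mem_univ x)
  have hvσ : v σ = 0 := by
    have : (α * h σ - ∑ y, A y σ * h y) * |v σ| = 0 := by
      linarith [hterm σ, hfst σ, hsnd σ]
    simpa [(sub_pos.2 hσ).ne'] using this
  have hharm : ∀ x, ∑ y, A x y * |v y| = α * |v x| := fun x => by
    have : h x * (∑ y, A x y * |v y| - α * |v x|) = 0 := by
      linarith [hterm x, hfst x, hsnd x]
    simpa [(hpos x).ne', sub_eq_zero] using this
  have step : ∀ {a b}, (a ≠ b ∧ 0 < A b a) → v b = 0 → v a = 0 := by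
    rintro a b ⟨-, hab⟩ hb
    have h1 := hharm b
    rw [hb, abs_zero, mul_zero] at h1
    have h2 := (Finset.sum_eq_zero_iff_of_nonneg (fun y _ => by
      by_cases hy : y = b
      · simp [hy, hb]
      · exact mul_nonneg (hM y b hy) (abs_nonneg _))).1 h1 a (Finset.mem_univ a)
    simpa [hab.ne'] using h2
  refine hv (funext fun x => ?_)
  by_cases hx : x = σ
  · rw [hx, hvσ, Pi.zero_apply]
  · refine Relation.TransGen.head_induction_on (motive := fun a _ => v a = 0) (hirr x σ hx) ?_ ?_
    · exact fun hab => step hab hvσ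
    · exact fun hab _ ih => step hab ih

end Metzler

/-- **Resolvent Formula.** For an irreducible Metzler matrix `A` with
nonpositive diagonal and Perron root `lam`, and every `α > 0`:
`lam ≥ α` iff the excursion weight `f(α)_{σ→σ}` is `≥ 1` for some `σ`,
iff it is `≥ 1` for every `σ`. -/
theorem resolvent_formula {V : Type*} [Fintype V] [DecidableEq V] [Nonempty V]
    (A : Matrix V V ℝ) (lam : ℝ)
    (hMetzler : A.IsMetzler) (hdiag : ∀ σ, A σ σ ≤ 0)
    (hirr : A.IsIrreducibleMetzlerChain) (hPerron : A.IsPerronRoot lam) :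
    ∀ α : ℝ, 0 < α →
      ((α ≤ lam ↔ ∃ σ : V, 1 ≤ excursionWeight A α σ) ∧
       (α ≤ lam ↔ ∀ σ : V, 1 ≤ excursionWeight A α σ)) := by
  intro α hα
  have hall : α ≤ lam → ∀ σ : V, 1 ≤ excursionWeight A α σ := by
    intro hlam σ
    by_contra! hσ
    obtain ⟨h, hpos, hle, hlt⟩ :=
      exists_supersolution_of_excursionWeight_lt_one hMetzler hdiag hirr hα hσ
    exact hlam.not_gt (hPerron.lt_of_supersolution hMetzler hdiag hirr hα hpos hle hlt)
  have hex : (∃ σ : V, 1 ≤ excursionWeight A α σ) → α ≤ lam := by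
    rintro ⟨σ, hσ⟩
    by_contra! hlam
    exact hσ.not_gt (excursionWeight_lt_one hPerron hMetzler hdiag hα hlam σ)
  exact ⟨⟨fun hlam => ⟨Classical.arbitrary V, hall hlam _⟩, hex⟩,
    ⟨hall, fun h => hex ⟨Classical.arbitrary V, h _⟩⟩⟩
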